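/- arXiv:1309.7734 — 3 statements merged into one kernel-verified Lean document; each statement's English description precedes it below -/
import Mathlib

section
/- Let m ≥ 1, let l ≥ 2 be an even integer, let 0 ≤ s ≤ 2m-1, and set d = (2^{2lm}-1)/(2^m+1) + 2^s; assume gcd(d, 2^{2lm}-1) = 1. Then there exists a nonzero z in GF(2^{2lm}) such that S_d(z) ≥ 2^{lm+1} (confirming the conjecture of Sarwate et al. for this decimation, with n = 2lm and t = lm). -/
noncomputable instance (p n : ℕ) [Fact p.Prime] : Fintype (GaloisField p n) :=
  Fintype.ofFinite _

/-- The Weil sum `S_d(z) = ∑_{x ∈ GF(2^n)} (-1)^{Tr(zx + x^d)}`, where `Tr` is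
the absolute trace from `GF(2^n)` to `GF(2)`. -/
noncomputable def binaryWeilSum (n d : ℕ) (z : GaloisField 2 n) : ℤ :=
  ∑ x : GaloisField 2 n,
    (-1 : ℤ) ^ (Algebra.trace (ZMod 2) (GaloisField 2 n) (z * x + x ^ d)).val

set_option linter.unusedSectionVars false

section aux
open Finset
variable {F : Type*} [Field F] [Fintype F] [Algebra (ZMod 2) F] [DecidableEq F]

noncomputable def chiW (a : F) : ℤ := (-1 : ℤ) ^ (Algebra.trace (ZMod 2) F a).val

lemma chiW_add (a b : F) : chiW (a + b) = chiW a * chiW b := by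
  unfold chiW
  rw [map_add]
  generalize Algebra.trace (ZMod 2) F a = u
  generalize Algebra.trace (ZMod 2) F b = v
  revert u v; decide

lemma chiW_zero : chiW (0 : F) = 1 := by simp [chiW]

lemma chiW_le (a : F) : chiW a ≤ 1 := by
  unfold chiW
  generalize Algebra.trace (ZMod 2) F a = u
  revert u; decide

lemma chiW_frob (a : F) (k : ℕ) : chiW (a ^ 2 ^ k) = chiW a := by
  unfold chiW
  congr 2
  induction k with
  | zero => simp
  | succ k ih =>
    rw [pow_succ, pow_mul, ← ih]
    have := Algebra.trace_eq_of_algEquiv (FiniteField.frobeniusAlgEquivOfAlgebraic (ZMod 2) F) (a ^ 2 ^ k)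
    simpa [FiniteField.frobeniusAlgEquivOfAlgebraic_apply, ZMod.card] using this

lemma chiW_sum (c : F) (hc : c ≠ 0) : ∑ x : F, chiW (c * x) = 0 := by
  obtain ⟨y, hy⟩ : ∃ y : F, chiW y = -1 := by
    obtain ⟨y, hy⟩ := Algebra.trace_surjective (ZMod 2) F 1
    exact ⟨y, by simp [chiW, hy, ZMod.val_one]⟩
  have h : ∑ x : F, chiW (c * x) = ∑ x : F, chiW (c * (x + c⁻¹ * y)) :=
    (Equiv.sum_comp (Equiv.addRight (c⁻¹ * y)) (fun x => chiW (c * x))).symm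
  have h2 : ∀ x : F, chiW (c * (x + c⁻¹ * y)) = - chiW (c * x) := by
    intro x
    rw [mul_add, mul_inv_cancel_left₀ hc, chiW_add, hy]; ring
  simp only [h2, sum_neg_distrib] at h
  omega

lemma frob_bij (k : ℕ) : Function.Bijective (fun x : F => x ^ 2 ^ k) := by
  have : CharP F 2 := charP_of_injective_algebraMap (algebraMap (ZMod 2) F).injective 2
  have h : Function.Injective (fun x : F => x ^ 2 ^ k) := by
    intro x y h
    have := iterateFrobenius_inj F 2 k (a₁ := x) (a₂ := y)
    apply this
    simpa [iterateFrobenius_def] using h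
  exact Finite.injective_iff_bijective.mp h

noncomputable def TW (q : ℕ) (b : F) : ℤ := ∑ x : F, chiW (b * x ^ (q + 1))

lemma TW_sq (m : ℕ) (b : F) : (TW (2 ^ m) b) ^ 2 =
    Fintype.card F * ∑ h ∈ univ.filter (fun h : F => b * h + b ^ 2 ^ m * h ^ (2 ^ m * 2 ^ m) = 0),
      chiW (b * h ^ (2 ^ m + 1)) := by
  have : CharP F 2 := charP_of_injective_algebraMap (algebraMap (ZMod 2) F).injective 2
  set q := 2 ^ m with hq
  have e1 : (TW q b) ^ 2 = ∑ h : F, ∑ x : F, chiW (b * x ^ (q+1)) * chiW (b * (x + h) ^ (q+1)) := by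
    rw [sq, TW, sum_mul_sum]
    conv_rhs => rw [sum_comm]
    refine sum_congr rfl fun x _ => ?_
    exact (Equiv.sum_comp (Equiv.addLeft x) (fun y => chiW (b * x ^ (q+1)) * chiW (b * y ^ (q+1)))).symm
  rw [e1, mul_sum, sum_filter]
  refine sum_congr rfl fun h _ => ?_
  have e2 : ∀ x : F, chiW (b * x ^ (q+1)) * chiW (b * (x + h) ^ (q+1))
      = chiW (b * h ^ (q+1)) * chiW ((b * h + b ^ q * h ^ (q * q)) * x ^ q) := by
    intro x
    have a1 : (x + h) ^ q = x ^ q + h ^ q := add_pow_char_pow x h 2 m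
    have a2 : chiW ((b * h + b ^ q * h ^ (q * q)) * x ^ q) = chiW (b * h * x ^ q) * chiW (b * h ^ q * x) := by
      rw [← chiW_frob (b * h ^ q * x) m, ← chiW_add]
      congr 1
      rw [← hq]; ring
    rw [a2, ← chiW_add, ← chiW_add, ← chiW_add]
    congr 1
    rw [pow_succ (x + h), a1]
    have : (2 : F) = 0 := CharTwo.two_eq_zero
    linear_combination (b * x ^ q * x) * this
  simp_rw [e2, ← mul_sum]
  rw [(frob_bij m).sum_comp (fun y : F => chiW ((b * h + b ^ q * h ^ (q * q)) * y))]
  split_ifs with h0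
  · simp [h0, chiW_zero, mul_comm]
  · rw [chiW_sum _ h0, mul_zero]

lemma TW_ge (m l : ℕ) (hm : 1 ≤ m) (b : F) (hb : b ≠ 0) (hF : Fintype.card F = (2 ^ m) ^ (2 * l)) :
    -((2:ℤ) ^ m) ^ (l + 1) ≤ TW (2 ^ m) b := by
  have h := TW_sq m b
  set q := 2 ^ m with hq
  have hq2 : 2 ≤ q := by
    calc 2 = 2 ^ 1 := rfl
      _ ≤ 2 ^ m := Nat.pow_le_pow_right (by norm_num) hm
  set S := univ.filter (fun h : F => b * h + b ^ q * h ^ (q * q) = 0) with hS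
  have hc : S.card ≤ q * q := by
    let P : Polynomial F := Polynomial.C (b ^ q) * Polynomial.X ^ (q * q) + Polynomial.C b * Polynomial.X
    have hd : P.natDegree = q * q := by
      have : 1 < q * q := by nlinarith
      have hbq : b ^ q ≠ 0 := pow_ne_zero _ hb
      dsimp only [P]
      rw [Polynomial.natDegree_add_eq_left_of_natDegree_lt, Polynomial.natDegree_C_mul_X_pow _ _ hbq]
      rw [Polynomial.natDegree_C_mul_X_pow _ _ hbq, Polynomial.natDegree_C_mul_X _ hb]
      exact this
    have hP : P ≠ 0 := by
      intro h0; rw [h0] at hd; simp at hd; omega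
    have hsub : S ⊆ P.roots.toFinset := by
      intro x hx
      simp only [hS, mem_filter, mem_univ, true_and] at hx
      simp only [Multiset.mem_toFinset, Polynomial.mem_roots hP, Polynomial.IsRoot, P]
      simp
      rw [add_comm]; exact hx
    calc S.card ≤ _ := card_le_card hsub
      _ ≤ _ := Multiset.toFinset_card_le _
      _ ≤ _ := Polynomial.card_roots' _
      _ = _ := hd
  have hs : ∑ h ∈ S, chiW (b * h ^ (q + 1)) ≤ (q:ℤ) * q := by
    calc ∑ h ∈ S, chiW (b * h ^ (q + 1)) ≤ ∑ h ∈ S, (1:ℤ) := sum_le_sum fun _ _ => chiW_le _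
      _ = S.card := by simp
      _ ≤ _ := by exact_mod_cast hc
  have h3 : (TW q b) ^ 2 ≤ (((2:ℤ) ^ m) ^ (l + 1)) ^ 2 := by
    rw [h, hF]
    have : (((2:ℤ) ^ m) ^ (l + 1)) ^ 2 = ((q ^ (2 * l) : ℕ) : ℤ) * (q * q) := by
      push_cast [hq]; ring
    rw [this]
    exact mul_le_mul_of_nonneg_left hs (by positivity)
  exact (abs_le_of_sq_le_sq' h3 (by positivity)).1

/-- number of solutions of `x ^ k = c` among units. -/
lemma card_fib (k : ℕ) (hk : k ∣ Fintype.card Fˣ) (c : Fˣ) (hc : c ∈ (powMonoidHom k : Fˣ →* Fˣ).range) :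
    (univ.filter (fun x : Fˣ => x ^ k = c)).card = k := by
  have h1 := MonoidHom.card_fiber_eq_of_mem_range (powMonoidHom k : Fˣ →* Fˣ) (x := c) (y := 1) hc ⟨1, by simp⟩
  simp only [powMonoidHom_apply] at h1
  rw [h1]
  have h2 := IsCyclic.card_powMonoidHom_ker (G := Fˣ) k
  rw [Nat.card_eq_fintype_card (α := Fˣ), Nat.gcd_eq_right hk] at h2
  refine Eq.trans ?_ h2
  rw [← Fintype.card_subtype, ← Nat.card_eq_fintype_card]
  rfl

lemma sum_units (f : F → ℤ) : ∑ x : F, f x = f 0 + ∑ x : Fˣ, f x := by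
  rw [← Finset.add_sum_erase univ _ (mem_univ (0:F))]
  congr 1
  symm
  refine sum_bij (fun x _ => (x : F)) (by simp) (by simp [Units.ext_iff]) ?_ (by simp)
  intro b hb
  exact ⟨Units.mk0 b (by simpa using hb), by simp, by simp⟩

lemma mem_rangeW (k r : ℕ) (hk : k * r = Fintype.card Fˣ) (c : Fˣ) (hc : c ^ r = 1) :
    c ∈ (powMonoidHom k : Fˣ →* Fˣ).range := by
  have hpos : 0 < k * r := hk ▸ Fintype.card_pos
  have hk0 : 0 < k := Nat.pos_of_mul_pos_right hpos
  have h1 := IsCyclic.card_powMonoidHom_range (G := Fˣ) k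
  have h2 := IsCyclic.card_powMonoidHom_ker (G := Fˣ) r
  rw [Nat.card_eq_fintype_card (α := Fˣ), ← hk] at h1 h2
  rw [Nat.gcd_eq_right (Dvd.intro _ rfl), Nat.mul_div_cancel_left _ hk0] at h1
  rw [Nat.gcd_eq_right (Dvd.intro_left _ rfl)] at h2
  have h3 : (powMonoidHom k : Fˣ →* Fˣ).range ≤ (powMonoidHom r : Fˣ →* Fˣ).ker := by
    rintro _ ⟨x, rfl⟩
    rw [MonoidHom.mem_ker, powMonoidHom_apply, powMonoidHom_apply, ← pow_mul, hk, pow_card_eq_one]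
  rw [Subgroup.eq_of_le_of_card_ge h3 (by rw [h1, h2])]
  exact hc

lemma TW_mod (q : ℕ) (b : F) (hk : (q + 1) ∣ Fintype.card Fˣ) : ((q:ℤ) + 1) ∣ TW q b - 1 := by
  have : TW q b - 1 = ∑ x : Fˣ, chiW (b * ((x ^ (q+1) : Fˣ) : F)) := by
    unfold TW
    rw [sum_units]
    simp [chiW_zero]
  rw [this, ← sum_fiberwise_of_maps_to (s := univ) (t := univ.image (fun x : Fˣ => x ^ (q+1))) (g := fun x : Fˣ => x ^ (q+1)) (by simp)]
  refine dvd_sum fun c hc => ?_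
  rw [sum_congr rfl (g := fun _ => chiW (b * (c : F)))]
  · rw [sum_const, card_fib _ hk]
    · simp
    · simpa using hc
  · intro x hx
    simp only [mem_filter] at hx
    rw [hx.2]

lemma TW_eq (m l K : ℕ) (hm : 1 ≤ m) (hl : Even l) (b : F) (hF : Fintype.card F = (2 ^ m) ^ (2 * l))
    (hK : K * (2 ^ m + 1) = Fintype.card Fˣ) (hqK : (2 ^ m - 1) ∣ K) (hb : b ≠ 0) (hbK : b ^ K ≠ 1) :
    TW (2 ^ m) b = ((2:ℤ) ^ m) ^ l := by
  have h := TW_sq m b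
  have h5 := TW_mod (2 ^ m) b (Dvd.intro_left _ hK)
  set q := 2 ^ m with hq
  have hq2 : 2 ≤ q := by
    calc 2 = 2 ^ 1 := rfl
      _ ≤ 2 ^ m := Nat.pow_le_pow_right (by norm_num) hm
  have : CharP F 2 := charP_of_injective_algebraMap (algebraMap (ZMod 2) F).injective 2
  have hS : univ.filter (fun h : F => b * h + b ^ q * h ^ (q * q) = 0) = {0} := by
    ext h
    simp only [mem_filter, mem_univ, true_and, mem_singleton]
    constructor
    · intro hh
      by_contra h0
      apply hbK
      obtain ⟨j, hj⟩ := hqK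
      have e1 : (b * h ^ (q + 1)) ^ (q - 1) = 1 := by
        have hne : b * h ≠ 0 := mul_ne_zero hb h0
        apply mul_left_cancel₀ hne
        rw [mul_one]
        obtain ⟨r, hr⟩ : ∃ r, q = r + 1 := ⟨q - 1, by omega⟩
        have := CharTwo.add_eq_zero.mp hh
        rw [hr] at this ⊢
        simp only [Nat.add_sub_cancel]
        calc b * h * (b * h ^ (r + 1 + 1)) ^ r = b ^ (r + 1) * h ^ ((r + 1) * (r + 1)) := by ring
          _ = _ := this.symm
      have e2 : (b * h ^ (q + 1)) ^ K = 1 := by rw [hj, pow_mul, e1, one_pow]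
      rw [mul_pow, ← pow_mul, mul_comm (q + 1), hK, Fintype.card_units, FiniteField.pow_card_sub_one_eq_one h h0, mul_one] at e2
      exact e2
    · rintro rfl
      simp; right; omega
  rw [hS, sum_singleton, hF] at h
  have h2 : (TW q b) ^ 2 = (((2:ℤ) ^ m) ^ l) ^ 2 := by
    rw [h]; simp [chiW_zero, hq]; ring
  rcases sq_eq_sq_iff_eq_or_eq_neg.mp h2 with h3 | h3
  · exact h3
  · exfalso
    have h4 : ((q:ℤ) + 1) ∣ ((2:ℤ) ^ m) ^ l - 1 := by
      obtain ⟨r, hr⟩ := hl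
      have e : ((2:ℤ) ^ m) ^ l = (q * q : ℤ) ^ r := by rw [hr, hq]; push_cast; ring
      rw [e]
      refine dvd_trans ?_ (sub_one_dvd_pow_sub_one _ _)
      exact ⟨q - 1, by ring⟩
    have h6 := dvd_add h4 h5
    rw [h3] at h6
    have h7 : ((q:ℤ) + 1) ∣ 2 := by
      have : ((2:ℤ) ^ m) ^ l - 1 + (-((2:ℤ) ^ m) ^ l - 1) = -2 := by ring
      rw [this] at h6
      exact (dvd_neg.mp h6)
    have := Int.le_of_dvd (by norm_num) h7
    omega

lemma master (q K s : ℕ) (hK : K * (q + 1) = Fintype.card Fˣ) (z : F) (ρ : Fˣ → F)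
    (hρ : ∀ x : Fˣ, ρ x ^ 2 ^ s = (x : F) ^ K) :
    (Fintype.card Fˣ : ℤ) * ∑ x : F, chiW (z * x + x ^ (K + 2 ^ s)) =
      ∑ x : Fˣ, TW q (x * (z + ρ x)) := by
  have hpos : 0 < K * (q + 1) := hK ▸ Fintype.card_pos
  have hf : ∀ x : Fˣ, chiW (z * x + (x:F) ^ (K + 2 ^ s)) = chiW (x * (z + ρ x)) := by
    intro x
    have : (x:F) ^ (K + 2 ^ s) = (x * ρ x) ^ 2 ^ s := by
      rw [mul_pow, hρ, pow_add, mul_comm]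
    rw [chiW_add, this, chiW_frob, ← chiW_add]
    congr 1; ring
  have hinv : ∀ x y : Fˣ, ρ (x * y ^ (q + 1)) = ρ x := by
    intro x y
    apply (frob_bij (F := F) s).1
    simp only
    rw [hρ, hρ]
    push_cast
    rw [mul_pow, ← pow_mul, mul_comm (q+1), hK, ← Units.val_pow_eq_pow_val y, pow_card_eq_one]; simp
  rw [sum_units]
  have e : ∀ x : Fˣ, TW q (x * (z + ρ x)) = 1 + ∑ y : Fˣ, chiW ((x * y ^ (q+1) : Fˣ) * (z + ρ (x * y ^ (q+1)))) := by
    intro x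
    rw [TW, sum_units]
    congr 1
    · simp [chiW_zero]
    · refine sum_congr rfl fun y _ => ?_
      rw [hinv]; push_cast; congr 1; ring
  simp_rw [e, hf]
  rw [sum_add_distrib, sum_comm]
  have e3 : ∀ y : Fˣ, ∑ x : Fˣ, chiW ((x * y ^ (q+1) : Fˣ) * (z + ρ (x * y ^ (q+1)))) = ∑ x : Fˣ, chiW (x * (z + ρ x)) := by
    intro y
    exact Equiv.sum_comp (Equiv.mulRight (y ^ (q+1))) (fun x : Fˣ => chiW ((x:F) * (z + ρ x)))
  simp_rw [e3]
  have h0 : K + 2 ^ s ≠ 0 := by positivity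
  simp [chiW_zero, mul_add]

/-- If `T ≥ B` off the fibre, we bound the Weil sum from below. -/
lemma lower (q K s : ℕ) (hK : K * (q + 1) = Fintype.card Fˣ) (v : F) (hv : v ^ (q + 1) = 1) (B : ℤ)
    (hB : ∀ (x : Fˣ) (w : F), w ^ (q + 1) = 1 → w ^ 2 ^ s = (x:F) ^ K → w ≠ v → B ≤ TW q (x * (v + w))) :
    (Fintype.card F : ℤ) + q * B ≤ (q + 1) * ∑ x : F, chiW (v * x + x ^ (K + 2 ^ s)) := by
  have : CharP F 2 := charP_of_injective_algebraMap (algebraMap (ZMod 2) F).injective 2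
  have hpos : 0 < K * (q + 1) := hK ▸ Fintype.card_pos
  have hK0 : 0 < K := Nat.pos_of_mul_pos_right hpos
  have hex : ∀ x : Fˣ, ∃ w : F, w ^ 2 ^ s = (x:F) ^ K := fun x => (frob_bij (F := F) s).2 _
  choose ρ hρ using hex
  have hmu : ∀ x, ρ x ^ (q + 1) = 1 := by
    intro x
    apply (frob_bij (F := F) s).1
    simp only
    rw [← pow_mul, mul_comm, pow_mul, hρ, ← pow_mul, hK, ← Units.val_pow_eq_pow_val, pow_card_eq_one]; simp
  have hv0 : v ≠ 0 := by rintro rfl; simp at hv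
  let c : Fˣ := (Units.mk0 v hv0) ^ 2 ^ s
  have hc : c ∈ (powMonoidHom K : Fˣ →* Fˣ).range := by
    apply mem_rangeW K (q+1) hK
    have : (Units.mk0 v hv0) ^ (q + 1) = 1 := by ext; simpa using hv
    simp only [c]
    rw [← pow_mul, mul_comm, pow_mul, this, one_pow]
  have hcard := card_fib K (Dvd.intro _ hK) c hc
  have hiff : ∀ x : Fˣ, x ^ K = c ↔ ρ x = v := by
    intro x
    rw [← (frob_bij (F := F) s).1.eq_iff]
    simp only [hρ, c, Units.ext_iff]
    simp
  have hm := master q K s hK v ρ hρ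
  have hge : (K:ℤ) * Fintype.card F + (K * q : ℤ) * B ≤ ∑ x : Fˣ, TW q (x * (v + ρ x)) := by
    rw [← sum_filter_add_sum_filter_not univ (fun x : Fˣ => x ^ K = c)]
    have hcard2 : (univ.filter (fun x : Fˣ => ¬ x ^ K = c)).card = K * q := by
      have := card_filter_add_card_filter_not (s := (univ : Finset Fˣ)) (fun x : Fˣ => x ^ K = c)
      rw [hcard, card_univ, ← hK] at this
      linarith
    apply add_le_add
    · rw [sum_congr rfl (g := fun _ => (Fintype.card F : ℤ))]
      · rw [sum_const, hcard]; simp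
      · intro x hx
        simp only [mem_filter, hiff] at hx
        rw [hx.2, CharTwo.add_self_eq_zero]
        simp [TW, chiW_zero]
    · have := card_nsmul_le_sum (univ.filter (fun x : Fˣ => ¬ x ^ K = c)) (fun x => TW q (x * (v + ρ x))) B (by
        intro x hx
        simp only [mem_filter, hiff] at hx
        exact hB x (ρ x) (hmu x) (hρ x) hx.2)
      rw [hcard2] at this
      simpa using this
  rw [← hm, ← hK] at hge
  have hK0' : (0:ℤ) < K := by exact_mod_cast hK0
  refine le_of_mul_le_mul_left ?_ hK0'
  push_cast at hge
  linarith

lemma exists_v (q s : ℕ) : ∃ v : F, v ^ (q + 1) = 1 ∧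
    ∀ w : F, w ^ (q + 1) = 1 → w ≠ v → w ^ 2 ^ s ≠ (v * w) ^ 2 := by
  by_contra! hcon
  choose! f hf1 hf2 hf3 using hcon
  let M := {v : F // v ^ (q + 1) = 1}
  let φ : M → M := fun v => ⟨f v.1, hf1 v.1 v.2⟩
  have hinj : Function.Injective φ := by
    intro a b hab
    have h : f a.1 = f b.1 := congrArg Subtype.val hab
    have h1 := hf3 a.1 a.2
    have h2 := hf3 b.1 b.2
    have hne : f b.1 ≠ 0 := by
      intro h0; have := hf1 b.1 b.2; rw [h0] at this; simp at this
    rw [h, h2] at h1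
    apply Subtype.ext
    have h3 := (frob_bij (F := F) 1).1 (by simpa using h1)
    exact (mul_right_cancel₀ hne h3).symm
  obtain ⟨v, hv⟩ := (Finite.injective_iff_surjective.mp hinj) ⟨1, one_pow _⟩
  have h1 : f v.1 = 1 := congrArg Subtype.val hv
  have h3 := hf3 v.1 v.2
  rw [h1] at h3
  have h4 := (frob_bij (F := F) 1).1 (a₁ := v.1) (a₂ := 1) (by simpa using h3.symm)
  exact hf2 v.1 v.2 (by rw [h1, h4])

lemma case_two (m s K : ℕ) (hm : 1 ≤ m) (hF : Fintype.card F = (2 ^ m) ^ (2 * 2))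
    (hK : K * (2 ^ m + 1) = Fintype.card Fˣ) :
    ∃ z : F, z ≠ 0 ∧ (2:ℤ) ^ (2 * m + 1) ≤ ∑ x : F, chiW (z * x + x ^ (K + 2 ^ s)) := by
  have : CharP F 2 := charP_of_injective_algebraMap (algebraMap (ZMod 2) F).injective 2
  obtain ⟨v, hv, hvw⟩ := exists_v (F := F) (2 ^ m) s
  have hv0 : v ≠ 0 := by rintro rfl; simp at hv
  refine ⟨v, hv0, ?_⟩
  have hq2 : 2 ≤ 2 ^ m := by
    calc 2 = 2 ^ 1 := rfl
      _ ≤ 2 ^ m := Nat.pow_le_pow_right (by norm_num) hm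
  have hKv : K = (2 ^ m - 1) * (2 ^ m * 2 ^ m + 1) := by
    rw [Fintype.card_units, hF] at hK
    obtain ⟨r, hr⟩ : ∃ r, 2 ^ m = r + 1 := ⟨2 ^ m - 1, by omega⟩
    rw [hr] at hK ⊢
    apply Nat.eq_of_mul_eq_mul_right (show 0 < r + 1 + 1 by omega)
    rw [hK, Nat.add_sub_cancel]
    apply Nat.sub_eq_of_eq_add
    ring
  have hlow := lower (2 ^ m) K s hK v hv (((2:ℤ) ^ m) ^ 2) (by
    intro x w hw hwx hne
    have hw0 : w ≠ 0 := by rintro rfl; simp at hw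
    have hs0 : v + w ≠ 0 := fun h => hne (CharTwo.add_eq_zero.mp h).symm
    apply le_of_eq
    symm
    apply TW_eq m 2 K hm even_two _ hF hK (hKv ▸ Dvd.intro _ rfl) (mul_ne_zero x.ne_zero hs0)
    intro h1
    apply hvw w hw hne
    rw [mul_pow, ← hwx] at h1
    have a1 : (v + w) ^ 2 ^ m = v ^ 2 ^ m + w ^ 2 ^ m := add_pow_char_pow v w 2 m
    generalize 2 ^ m = q at *
    have a2 : (v * w) * (v + w) ^ (q - 1) = 1 := by
      apply mul_right_cancel₀ hs0
      rw [mul_assoc, ← pow_succ, Nat.sub_add_cancel (by omega), a1]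
      rw [pow_succ] at hv hw
      linear_combination w * hv + v * hw
    have a3 : (v * w) ^ (q * q + 1) = (v * w) ^ 2 := by
      have hu : (v * w) ^ (q + 1) = 1 := by rw [mul_pow, hv, hw, one_mul]
      obtain ⟨r, rfl⟩ : ∃ r, q = r + 1 := ⟨q - 1, by omega⟩
      have : (r + 1) * (r + 1) + 1 = (r + 1 + 1) * r + 2 := by ring
      rw [this, pow_add, pow_mul, hu, one_pow, one_mul]
    have a4 : (v * w) ^ 2 * (v + w) ^ K = 1 := by
      rw [← a3, hKv, pow_mul, ← mul_pow, a2, one_pow]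
    have hne : (v + w) ^ K ≠ 0 := pow_ne_zero _ hs0
    apply mul_right_cancel₀ hne
    rw [h1, a4])
  rw [hF] at hlow
  have h2 : (2:ℤ) ^ (2 * m + 1) = 2 * ((2:ℤ) ^ m) ^ 2 := by ring
  rw [h2]
  push_cast at hlow
  have hq2' : (2:ℤ) ≤ 2 ^ m := by exact_mod_cast hq2
  generalize (2:ℤ) ^ m = q at *
  refine le_of_mul_le_mul_left (le_trans ?_ hlow) (show (0:ℤ) < q + 1 by omega)
  nlinarith [mul_nonneg (mul_nonneg (sq_nonneg q) (by omega : (0:ℤ) ≤ q - 2)) (by omega : (0:ℤ) ≤ q + 1)]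

lemma case_big (m l s K : ℕ) (hm : 1 ≤ m) (hl : 4 ≤ l) (hF : Fintype.card F = (2 ^ m) ^ (2 * l))
    (hK : K * (2 ^ m + 1) = Fintype.card Fˣ) :
    ∃ z : F, z ≠ 0 ∧ (2:ℤ) ^ (l * m + 1) ≤ ∑ x : F, chiW (z * x + x ^ (K + 2 ^ s)) := by
  have : CharP F 2 := charP_of_injective_algebraMap (algebraMap (ZMod 2) F).injective 2
  refine ⟨1, one_ne_zero, ?_⟩
  have hq2 : 2 ≤ 2 ^ m := by
    calc 2 = 2 ^ 1 := rfl
      _ ≤ 2 ^ m := Nat.pow_le_pow_right (by norm_num) hm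
  have hlow := lower (2 ^ m) K s hK (1 : F) (one_pow _) (-((2:ℤ) ^ m) ^ (l + 1)) (by
    intro x w hw hwx hne
    have hs0 : 1 + w ≠ 0 := fun h => hne (CharTwo.add_eq_zero.mp h).symm
    exact TW_ge m l hm _ (mul_ne_zero x.ne_zero hs0) hF)
  rw [hF] at hlow
  have h2 : (2:ℤ) ^ (l * m + 1) = 2 * ((2:ℤ) ^ m) ^ l := by ring
  rw [h2]
  push_cast at hlow
  have hq2' : (2:ℤ) ≤ 2 ^ m := by exact_mod_cast hq2
  generalize (2:ℤ) ^ m = q at *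
  refine le_of_mul_le_mul_left (le_trans ?_ hlow) (show (0:ℤ) < q + 1 by omega)
  have h4 : q ^ 4 ≤ q ^ l := pow_le_pow_right₀ (by omega) hl
  have h5 : 2 * (q + 1) + q ^ 2 ≤ q ^ 4 := by nlinarith [mul_nonneg (by nlinarith : (0:ℤ) ≤ q ^ 2 - 4) (sq_nonneg q)]
  have h6 : 0 ≤ q ^ l := by positivity
  have : q ^ (2 * l) + q * -q ^ (l + 1) = q ^ l * (q ^ l - q ^ 2) := by ring
  rw [this]
  nlinarith [mul_nonneg h6 (by linarith : 0 ≤ q ^ l - q ^ 2 - 2 * (q + 1))]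
end aux

/-- The conjecture of Sarwate et al. holds for `d = (2^(2lm)-1)/(2^m+1) + 2^s`
with `l ≥ 2` even: there is a nonzero `z` with `S_d(z) ≥ 2^(lm+1)`. -/
theorem weil_sum_large_value (m l s d : ℕ) (hm : 1 ≤ m) (hl : 2 ≤ l) (hle : Even l)
    (hs : s ≤ 2 * m - 1) (hd : d = (2 ^ (2 * l * m) - 1) / (2 ^ m + 1) + 2 ^ s)
    (hgcd : Nat.gcd d (2 ^ (2 * l * m) - 1) = 1) :
    ∃ z : GaloisField 2 (2 * l * m), z ≠ 0 ∧
      (2 ^ (l * m + 1) : ℤ) ≤ binaryWeilSum (2 * l * m) d z := by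
  classical
  have hF0 : Fintype.card (GaloisField 2 (2 * l * m)) = 2 ^ (2 * l * m) := by
    rw [← Nat.card_eq_fintype_card]
    exact GaloisField.card 2 _ (by positivity)
  have hF : Fintype.card (GaloisField 2 (2 * l * m)) = (2 ^ m) ^ (2 * l) := by
    rw [hF0, ← pow_mul, mul_comm m]
  have hK : (2 ^ (2 * l * m) - 1) / (2 ^ m + 1) * (2 ^ m + 1) = Fintype.card (GaloisField 2 (2 * l * m))ˣ := by
    rw [Fintype.card_units, hF0]
    apply Nat.div_mul_cancel
    have h1 : (2:ℕ) ^ (2 * l * m) = (2 ^ m * 2 ^ m) ^ l := by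
      rw [← pow_add, ← pow_mul]; congr 1; ring
    rw [h1]
    refine dvd_trans ⟨2 ^ m - 1, ?_⟩ (Nat.sub_one_dvd_pow_sub_one (2 ^ m * 2 ^ m) l)
    exact Nat.mul_self_sub_mul_self_eq (2 ^ m) 1
  rw [hd]
  unfold binaryWeilSum
  by_cases h2 : l = 2
  · subst h2
    exact case_two m s _ hm hF hK
  · have h4 : 4 ≤ l := by
      obtain ⟨r, hr⟩ := hle
      omega
    exact case_big m l s _ hm h4 hF hK
end

section
/- Let m ≥ 1, let l > 2 be an even integer, let 0 ≤ s ≤ 2m-1, and set d = (2^{2lm}-1)/(2^m+1) + 2^s; assume gcd(d, 2^{2lm}-1) = 1. Let σ be the multiplicative inverse of 2^s modulo 2^{2lm}-1. Then for every z in GF(2^{2lm}) of the form z = x₀^{dσ-1} for some nonzero x₀ in GF(2^{2lm}), one has S_d(z) ≥ 2^{(l+2)m}·(2^{(l-2)m}-1)/(2^m+1), and in particular S_d(z) > 2^{lm+1}. -/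
set_option linter.unusedSectionVars false

section helpers

variable {F : Type*} [Field F] [Fintype F] [Algebra (ZMod 2) F]

/-- The additive character `x ↦ (-1)^Tr(x)`. -/
noncomputable def psi (x : F) : ℤ := (-1 : ℤ) ^ (Algebra.trace (ZMod 2) F x).val

lemma psi_add (x y : F) : psi (x + y) = psi x * psi y := by
  unfold psi
  rw [map_add]
  generalize Algebra.trace (ZMod 2) F x = a
  generalize Algebra.trace (ZMod 2) F y = b
  revert a b
  decide

lemma psi_zero : psi (0 : F) = 1 := by simp [psi]

lemma psi_le_one (x : F) : psi x ≤ 1 := by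
  unfold psi
  rcases neg_one_pow_eq_or ℤ (Algebra.trace (ZMod 2) F x).val with h | h <;> simp [h]

lemma charP_two (F : Type*) [Field F] [Algebra (ZMod 2) F] : CharP F 2 :=
  charP_of_injective_algebraMap (algebraMap (ZMod 2) F).injective 2

lemma trace_pow_two_pow (x : F) (k : ℕ) :
    Algebra.trace (ZMod 2) F (x ^ 2 ^ k) = Algebra.trace (ZMod 2) F x := by
  induction k with
  | zero => simp
  | succ k ih =>
    rw [pow_succ, pow_mul, ← ih]
    have h := Algebra.trace_eq_of_algEquiv
      (FiniteField.frobeniusAlgEquivOfAlgebraic (ZMod 2) F) (x ^ 2 ^ k)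
    simpa [FiniteField.coe_frobeniusAlgEquivOfAlgebraic, ZMod.card] using h

lemma psi_pow_two_pow (x : F) (k : ℕ) : psi (x ^ 2 ^ k) = psi x := by
  unfold psi; rw [trace_pow_two_pow]

lemma sum_psi_mul [DecidableEq F] (c : F) :
    ∑ y : F, psi (c * y) = if c = 0 then (Fintype.card F : ℤ) else 0 := by
  split_ifs with hc
  · simp [hc, psi_zero]
  · obtain ⟨y₀, hy₀⟩ : ∃ y, Algebra.trace (ZMod 2) F y ≠ 0 := by
      by_contra! h
      exact Algebra.trace_ne_zero (ZMod 2) F (LinearMap.ext h)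
    have h1 : psi y₀ = -1 := by
      unfold psi
      generalize Algebra.trace (ZMod 2) F y₀ = a at hy₀
      revert a; decide
    have h2 : ∑ y : F, psi (c * y) = ∑ y : F, psi (c * (y + c⁻¹ * y₀)) :=
      (Equiv.sum_comp (Equiv.addRight (c⁻¹ * y₀)) (fun y => psi (c * y))).symm
    have h3 : ∀ y : F, psi (c * (y + c⁻¹ * y₀)) = - psi (c * y) := by
      intro y
      rw [mul_add, mul_inv_cancel_left₀ hc, psi_add, h1]; ring
    simp only [h3, Finset.sum_neg_distrib] at h2
    linarith

lemma sum_psi_mul_pow [DecidableEq F] (c : F) (k : ℕ) :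
    ∑ y : F, psi (c * y ^ 2 ^ k) = if c = 0 then (Fintype.card F : ℤ) else 0 := by
  have := charP_two F
  have : Fact (Nat.Prime 2) := ⟨Nat.prime_two⟩
  rw [← sum_psi_mul]
  have hb : Function.Bijective (fun y : F => y ^ 2 ^ k) := by
    have := (iterateFrobenius F 2 k).injective
    refine Finite.injective_iff_bijective.mp ?_
    intro a b h
    apply this
    simpa [iterateFrobenius_def] using h
  exact hb.sum_comp (fun y => psi (c * y))

lemma card_ker_le [DecidableEq F] (b : F) (hb : b ≠ 0) (m : ℕ) (hm : 1 ≤ m) :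
    (Finset.univ.filter (fun w : F => b ^ 2 ^ m * w ^ (2 ^ m * 2 ^ m) + b * w = 0)).card
      ≤ 2 ^ m * 2 ^ m := by
  classical
  set P : Polynomial F := Polynomial.C (b ^ 2 ^ m) * Polynomial.X ^ (2 ^ m * 2 ^ m)
    + Polynomial.C b * Polynomial.X with hP
  have h2 : 2 ≤ 2 ^ m := by
    calc 2 = 2 ^ 1 := rfl
      _ ≤ 2 ^ m := Nat.pow_le_pow_right (by norm_num) hm
  have hlt : 1 < 2 ^ m * 2 ^ m := by nlinarith
  have hP0 : P ≠ 0 := by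
    intro h
    have : P.coeff 1 = b := by
      rw [hP, Polynomial.coeff_add, Polynomial.coeff_C_mul, Polynomial.coeff_C_mul,
        Polynomial.coeff_X_pow, if_neg hlt.ne]
      simp
    rw [h] at this
    exact hb (by simpa using this.symm)
  have hdeg : P.natDegree ≤ 2 ^ m * 2 ^ m := by
    rw [hP]
    refine (Polynomial.natDegree_add_le _ _).trans (max_le ?_ ?_)
    · exact Polynomial.natDegree_C_mul_X_pow_le _ _
    · exact (Polynomial.natDegree_C_mul_le _ _).trans (by simpa using hlt.le)
  refine le_trans ?_ ((Polynomial.card_roots' P).trans hdeg)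
  refine le_trans (Finset.card_le_card ?_) (Multiset.toFinset_card_le _)
  intro w hw
  simp only [Finset.mem_filter, Finset.mem_univ, true_and] at hw
  rw [Multiset.mem_toFinset, Polynomial.mem_roots hP0]
  simpa [hP, Polynomial.IsRoot] using hw

lemma T_sq_le [DecidableEq F] (b : F) (hb : b ≠ 0) (m : ℕ) (hm : 1 ≤ m) :
    (∑ y : F, psi (b * y ^ (2 ^ m + 1))) ^ 2 ≤ (Fintype.card F : ℤ) * (2 ^ m * 2 ^ m) := by
  have := charP_two F
  have : Fact (Nat.Prime 2) := ⟨Nat.prime_two⟩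
  have key : (∑ y : F, psi (b * y ^ (2 ^ m + 1))) ^ 2
      = ∑ w : F, psi (b * w ^ (2 ^ m + 1)) *
        (if b ^ 2 ^ m * w ^ (2 ^ m * 2 ^ m) + b * w = 0 then (Fintype.card F : ℤ) else 0) := by
    rw [sq, Finset.sum_mul_sum]
    have h1 : ∀ y : F, ∑ w : F, psi (b * y ^ (2 ^ m + 1)) * psi (b * w ^ (2 ^ m + 1))
        = ∑ w : F, psi (b * y ^ (2 ^ m + 1)) * psi (b * (w + y) ^ (2 ^ m + 1)) := fun y =>
      (Equiv.sum_comp (Equiv.addRight y)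
        (fun w => psi (b * y ^ (2 ^ m + 1)) * psi (b * w ^ (2 ^ m + 1)))).symm
    simp only [h1]
    rw [Finset.sum_comm]
    refine Finset.sum_congr rfl fun w _ => ?_
    rw [← sum_psi_mul_pow, Finset.mul_sum]
    refine Finset.sum_congr rfl fun y _ => ?_
    have e1 : psi ((b ^ 2 ^ m * w ^ (2 ^ m * 2 ^ m) + b * w) * y ^ 2 ^ m)
        = psi (b * w ^ 2 ^ m * y) * psi (b * w * y ^ 2 ^ m) := by
      rw [add_mul, psi_add, ← psi_pow_two_pow (b * w ^ 2 ^ m * y) m]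
      congr 2
      rw [mul_pow, mul_pow, pow_mul]
    rw [e1, ← psi_add, ← psi_add, ← psi_add]
    congr 1
    rw [pow_succ (w + y), add_pow_char_pow]
    have h2 : (2 : F) = 0 := CharTwo.two_eq_zero
    linear_combination (b * y ^ (2 ^ m + 1)) * h2
  rw [key]
  calc _ ≤ ∑ w : F, (if b ^ 2 ^ m * w ^ (2 ^ m * 2 ^ m) + b * w = 0
            then (Fintype.card F : ℤ) else 0) := by
        refine Finset.sum_le_sum fun w _ => ?_
        have := psi_le_one (b * w ^ (2 ^ m + 1))
        split_ifs
        · nlinarith [Int.natCast_nonneg (Fintype.card F)]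
        · simp
    _ = (Finset.univ.filter
          (fun w : F => b ^ 2 ^ m * w ^ (2 ^ m * 2 ^ m) + b * w = 0)).card
          * (Fintype.card F : ℤ) := by
        rw [← Finset.sum_filter, Finset.sum_const, nsmul_eq_mul]
    _ ≤ _ := by
        have := card_ker_le b hb m hm
        have h' : ((Finset.univ.filter
          (fun w : F => b ^ 2 ^ m * w ^ (2 ^ m * 2 ^ m) + b * w = 0)).card : ℤ)
            ≤ 2 ^ m * 2 ^ m := by exact_mod_cast this
        rw [mul_comm]
        exact mul_le_mul_of_nonneg_left h' (Int.natCast_nonneg _)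

/-- Main estimate, for a general finite field with `2^(2lm)` elements. -/
lemma main_bound [DecidableEq F] (m l s d σ e : ℕ) (hm : 1 ≤ m) (hl : 2 < l)
    (hcard : Fintype.card F = 2 ^ (2 * l * m))
    (he : e * (2 ^ m + 1) = 2 ^ (2 * l * m) - 1)
    (hd : d = e + 2 ^ s)
    (hσ : 2 ^ s * σ ≡ 1 [MOD 2 ^ (2 * l * m) - 1])
    (z x₀ : F) (hx₀ : x₀ ≠ 0) (hz : z = x₀ ^ (d * σ - 1)) :
    (2 ^ (2 * l * m) - 2 ^ ((l + 2) * m) : ℤ)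
      ≤ (2 ^ m + 1) * ∑ x : F, psi (z * x + x ^ d) := by
  have hQ : ∀ x : F, x ≠ 0 → x ^ (2 ^ s * σ) = x := by
    intro x hx
    have h1 : x ^ (2 ^ (2 * l * m) - 1) = 1 := by
      rw [← hcard]; exact FiniteField.pow_card_sub_one_eq_one x hx
    have := pow_eq_pow_of_modEq hσ h1
    simpa using this
  have hq0 : 0 < 2 ^ m := by positivity
  have hN : 2 ≤ 2 ^ (2 * l * m) := by
    have : 1 ≤ 2 * l * m := by nlinarith
    calc 2 = 2 ^ 1 := rfl
      _ ≤ _ := Nat.pow_le_pow_right (by norm_num) this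
  have he0 : 0 < e := by
    rcases Nat.eq_zero_or_pos e with h | h
    · subst h; omega
    · exact h
  have hσ0 : 0 < σ := by
    rcases Nat.eq_zero_or_pos σ with h | h
    · subst h
      exfalso
      have h1 : (2 ^ (2 * l * m) - 1) ∣ 1 := by
        have := (Nat.modEq_iff_dvd' (by norm_num)).mp hσ
        simpa using this
      have h4 : (2 : ℕ) ^ 2 ≤ 2 ^ (2 * l * m) :=
        Nat.pow_le_pow_right (by norm_num) (by nlinarith)
      have := Nat.le_of_dvd (by norm_num) h1
      omega
    · exact h
  have hd0 : d ≠ 0 := by rw [hd]; exact (Nat.add_pos_left he0 _).ne'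
  have hzx : z = x₀ ^ (e * σ) := by
    have h1 : 1 ≤ d * σ := Nat.mul_pos (Nat.pos_of_ne_zero hd0) hσ0
    have h2 : z * x₀ = x₀ ^ (e * σ) * x₀ := by
      rw [hz, ← pow_succ, Nat.sub_add_cancel h1, hd, add_mul, pow_add, hQ x₀ hx₀]
    exact mul_right_cancel₀ hx₀ h2
  have hg : ∀ u : Fˣ, psi (z * (u : F) + (u : F) ^ d)
      = psi ((u : F) * (z + (u : F) ^ (e * σ))) := by
    intro u
    rw [mul_add, psi_add, psi_add, mul_comm z]
    congr 1
    rw [← psi_pow_two_pow ((u : F) * (u : F) ^ (e * σ)) s]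
    congr 1
    rw [mul_pow, ← pow_mul, show e * σ * 2 ^ s = (2 ^ s * σ) * e by ring, pow_mul _ (2 ^ s * σ) e,
      hQ _ u.ne_zero, hd, pow_add, mul_comm]
  have hsplit : ∀ g : F → ℤ, ∑ x : F, g x = g 0 + ∑ u : Fˣ, g u := by
    intro g
    rw [Fintype.sum_eq_add_sum_subtype_ne g 0]
    congr 1
    exact (Equiv.sum_comp unitsEquivNeZero (fun x : {a : F // a ≠ 0} => g x)).symm
  have hS : ∑ x : F, psi (z * x + x ^ d)
      = 1 + ∑ u : Fˣ, psi ((u : F) * (z + (u : F) ^ (e * σ))) := by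
    rw [hsplit]
    simp only [hg]
    simp [hd0, psi_zero]
  have hcu : Fintype.card Fˣ = 2 ^ (2 * l * m) - 1 := by
    rw [Fintype.card_units, hcard]
  set A : ℤ := ∑ u : Fˣ, psi ((u : F) * (z + (u : F) ^ (e * σ))) with hA
  -- averaging
  have havg : (Fintype.card Fˣ : ℤ) * A = ∑ u : Fˣ, ∑ y : Fˣ,
      psi ((u : F) * (z + (u : F) ^ (e * σ)) * (y : F) ^ (2 ^ m + 1)) := by
    rw [Finset.sum_comm]
    have h1 : ∀ y : Fˣ, ∑ u : Fˣ,
        psi ((u : F) * (z + (u : F) ^ (e * σ)) * (y : F) ^ (2 ^ m + 1)) = A := by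
      intro y
      rw [hA, ← Equiv.sum_comp (Equiv.mulRight (y ^ (2 ^ m + 1)))
        (fun u : Fˣ => psi ((u : F) * (z + (u : F) ^ (e * σ))))]
      refine Finset.sum_congr rfl fun u _ => ?_
      have h2 : ((y : F) ^ (2 ^ m + 1)) ^ (e * σ) = 1 := by
        rw [← pow_mul, show (2 ^ m + 1) * (e * σ) = (e * (2 ^ m + 1)) * σ by ring, he, ← hcard,
          pow_mul, FiniteField.pow_card_sub_one_eq_one _ y.ne_zero, one_pow]
      simp only [Equiv.coe_mulRight, Units.val_mul, Units.val_pow_eq_pow_val]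
      rw [mul_pow, h2]
      congr 1
      ring
    simp only [h1, Finset.sum_const, Finset.card_univ, nsmul_eq_mul]
  set K : ℤ := 2 ^ ((l + 1) * m) + 1 with hK
  have hK0 : 0 < K := by positivity
  have hI : ∀ u : Fˣ, (if (u : F) ^ (e * σ) = z then (Fintype.card Fˣ : ℤ) + K else 0)
      ≤ (∑ y : Fˣ, psi ((u : F) * (z + (u : F) ^ (e * σ)) * (y : F) ^ (2 ^ m + 1))) + K := by
    intro u
    have := charP_two F
    split_ifs with h
    · rw [h, CharTwo.add_self_eq_zero]
      simp [psi_zero]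
    · have hb : (u : F) * (z + (u : F) ^ (e * σ)) ≠ 0 := by
        refine mul_ne_zero u.ne_zero fun h0 => h ?_
        exact (CharTwo.add_eq_zero.mp h0).symm
      have hT := T_sq_le _ hb m hm
      have h2 : (Fintype.card F : ℤ) * (2 ^ m * 2 ^ m) = (2 ^ ((l + 1) * m)) ^ 2 := by
        rw [hcard]; push_cast; ring
      rw [h2] at hT
      have h3 := neg_le_of_abs_le (abs_le_of_sq_le_sq hT (by positivity))
      rw [hsplit] at h3
      simp only [ne_eq, Nat.add_eq_zero_iff, one_ne_zero, and_false, not_false_eq_true, zero_pow,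
        mul_zero, psi_zero] at h3
      linarith
  -- counting
  have hcount : e ≤ (Finset.univ.filter (fun u : Fˣ => (u : F) ^ (e * σ) = z)).card := by
    have hk : Nat.card (powMonoidHom e : Fˣ →* Fˣ).ker = e := by
      rw [IsCyclic.card_powMonoidHom_ker, Nat.card_eq_fintype_card, hcu, ← he]
      exact Nat.gcd_eq_right (Dvd.intro _ rfl)
    have hk2 : (Finset.univ.filter (fun u : Fˣ => u ^ e = 1)).card = e := by
      refine Eq.trans ?_ hk
      rw [Nat.card_eq_fintype_card, ← Fintype.card_subtype]
      refine Fintype.card_congr (Equiv.subtypeEquivRight fun u => ?_)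
      simp [MonoidHom.mem_ker]
    conv_lhs => rw [← hk2]
    refine Finset.card_le_card_of_injOn (fun u => Units.mk0 x₀ hx₀ * u) ?_ ?_
    · intro u hu
      simp only [Finset.coe_filter, Finset.mem_univ, true_and, Set.mem_ofPred_eq] at hu ⊢
      have hu' : (u : F) ^ e = 1 := by
        rw [← Units.val_pow_eq_pow_val, hu, Units.val_one]
      rw [Units.val_mul, Units.val_mk0, mul_pow, pow_mul (u : F), hu', one_pow, mul_one, hzx]
    · intro a _ b _ h
      exact mul_left_cancel h
  have hsum := Finset.sum_le_sum (fun u (_ : u ∈ (Finset.univ : Finset Fˣ)) => hI u)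
  rw [Finset.sum_add_distrib, ← havg, ← Finset.sum_filter, Finset.sum_const, Finset.sum_const,
    nsmul_eq_mul, nsmul_eq_mul, Finset.card_univ] at hsum
  have hC : (Fintype.card Fˣ : ℤ) = e * (2 ^ m + 1) := by
    rw [hcu, ← he]; push_cast; ring
  have hC2 : (2 : ℤ) ^ (2 * l * m) = e * (2 ^ m + 1) + 1 := by
    have : e * (2 ^ m + 1) + 1 = 2 ^ (2 * l * m) := by omega
    exact_mod_cast this.symm
  rw [hC] at hsum
  have he0' : (0 : ℤ) < e := by exact_mod_cast he0
  have hcount' : (e : ℤ) ≤ (Finset.univ.filter (fun u : Fˣ => (u : F) ^ (e * σ) = z)).card := by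
    exact_mod_cast hcount
  have hs1 : (e : ℤ) * (e * (2 ^ m + 1) + K) ≤ e * ((2 ^ m + 1) * A + (2 ^ m + 1) * K) := by
    refine (mul_le_mul_of_nonneg_right hcount' (by positivity)).trans (hsum.trans (le_of_eq ?_))
    ring
  have hs2 := le_of_mul_le_mul_left hs1 he0'
  have hK2 : (2 : ℤ) ^ m * K = 2 ^ ((l + 2) * m) + 2 ^ m := by
    rw [hK]; ring
  rw [hS, hC2]
  nlinarith

end helpers

/-- For `l > 2` even, `d = (2^(2lm)-1)/(2^m+1) + 2^s` coprime to `2^(2lm)-1`,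
and `σ` the inverse of `2^s` modulo `2^(2lm)-1`: every `z = x₀^(dσ-1)` with
`x₀ ≠ 0` satisfies `S_d(z) ≥ 2^((l+2)m)(2^((l-2)m)-1)/(2^m+1)`, and in
particular `S_d(z) > 2^(lm+1)`. -/
theorem weil_sum_lower_bound_l_gt_two (m l s d σ : ℕ) (hm : 1 ≤ m) (hl : 2 < l)
    (hle : Even l) (hs : s ≤ 2 * m - 1)
    (hd : d = (2 ^ (2 * l * m) - 1) / (2 ^ m + 1) + 2 ^ s)
    (hgcd : Nat.gcd d (2 ^ (2 * l * m) - 1) = 1)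
    (hσ : 2 ^ s * σ ≡ 1 [MOD 2 ^ (2 * l * m) - 1]) :
    ∀ z x₀ : GaloisField 2 (2 * l * m), x₀ ≠ 0 → z = x₀ ^ (d * σ - 1) →
      ((2 ^ ((l + 2) * m) * (2 ^ ((l - 2) * m) - 1) / (2 ^ m + 1) : ℚ)
          ≤ (binaryWeilSum (2 * l * m) d z : ℚ)) ∧
        (2 ^ (l * m + 1) : ℤ) < binaryWeilSum (2 * l * m) d z := by
  intro z x₀ hx₀ hz
  classical
  have hdvd : 2 ^ m + 1 ∣ 2 ^ (2 * l * m) - 1 := by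
    have h1 : (2 ^ m) ^ 2 - 1 ∣ ((2 ^ m) ^ 2) ^ l - 1 := by
      simpa using Nat.sub_dvd_pow_sub_pow ((2 ^ m) ^ 2) 1 l
    have h2 : ((2 ^ m) ^ 2) ^ l = 2 ^ (2 * l * m) := by
      rw [← pow_mul, ← pow_mul]; congr 1; ring
    rw [h2] at h1
    refine Dvd.dvd.trans ⟨2 ^ m - 1, ?_⟩ h1
    rw [← Nat.sq_sub_sq, one_pow]
  have hn : 2 * l * m ≠ 0 := by
    have : 0 < 2 * l * m := by positivity
    omega
  have hcard : Fintype.card (GaloisField 2 (2 * l * m)) = 2 ^ (2 * l * m) := by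
    rw [← Nat.card_eq_fintype_card, GaloisField.card 2 _ hn]
  have hB := main_bound m l s d σ ((2 ^ (2 * l * m) - 1) / (2 ^ m + 1)) hm hl hcard
    (Nat.div_mul_cancel hdvd) hd hσ z x₀ hx₀ hz
  have hB' : (2 ^ (2 * l * m) - 2 ^ ((l + 2) * m) : ℤ)
      ≤ (2 ^ m + 1) * binaryWeilSum (2 * l * m) d z := hB
  clear hB
  generalize binaryWeilSum (2 * l * m) d z = S at hB'
  obtain ⟨k, rfl⟩ : ∃ k, l = k + 4 := by
    obtain ⟨r, hr⟩ := hle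
    exact ⟨l - 4, by omega⟩
  have hk : k + 4 - 2 = k + 2 := by omega
  rw [hk]
  constructor
  · have hBq : (2 ^ (2 * (k + 4) * m) - 2 ^ ((k + 4 + 2) * m) : ℚ) ≤ (2 ^ m + 1) * S := by
      exact_mod_cast hB'
    rw [div_le_iff₀ (by positivity)]
    refine le_trans (le_of_eq ?_) (hBq.trans (le_of_eq (mul_comm _ _)))
    ring
  · have hq : (2 : ℤ) ≤ 2 ^ m := by
      calc (2 : ℤ) = 2 ^ 1 := by norm_num
        _ ≤ 2 ^ m := pow_le_pow_right₀ (by norm_num) hm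
    have e1 : (2 : ℤ) ^ (2 * (k + 4) * m) = (2 ^ m) ^ (k + 4) * ((2 ^ m) ^ k * (2 ^ m) ^ 4) := by
      ring
    have e2 : (2 : ℤ) ^ ((k + 4 + 2) * m) = (2 ^ m) ^ (k + 4) * (2 ^ m) ^ 2 := by ring
    have e3 : (2 : ℤ) ^ ((k + 4) * m + 1) = (2 ^ m) ^ (k + 4) * 2 := by ring
    rw [e1, e2] at hB'
    rw [e3]
    generalize (2 : ℤ) ^ m = q at *
    have hp : (1 : ℤ) ≤ q ^ k := one_le_pow₀ (by linarith)
    have hP : (0 : ℤ) < q ^ (k + 4) := by positivity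
    have h1 : q ^ 4 - q ^ 2 ≤ q ^ k * q ^ 4 - q ^ 2 := by
      have : 0 ≤ (q ^ k - 1) * q ^ 4 := mul_nonneg (by linarith) (by positivity)
      linarith
    have h2 : 2 * (q + 1) < q ^ 4 - q ^ 2 := by
      have : q ^ 4 - q ^ 2 = q ^ 2 * (q - 1) * (q + 1) := by ring
      rw [this]
      have : 2 < q ^ 2 * (q - 1) := by nlinarith
      exact mul_lt_mul_of_pos_right this (by linarith)
    have h3 : q ^ (k + 4) * (2 * (q + 1)) < q ^ (k + 4) * (q ^ k * q ^ 4 - q ^ 2) :=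
      mul_lt_mul_of_pos_left (by linarith) hP
    have h4 : (q + 1) * (q ^ (k + 4) * 2) < (q + 1) * S := by
      calc _ = q ^ (k + 4) * (2 * (q + 1)) := by ring
        _ < _ := h3
        _ = q ^ (k + 4) * (q ^ k * q ^ 4) - q ^ (k + 4) * q ^ 2 := by ring
        _ ≤ _ := hB'
    exact lt_of_mul_lt_mul_left h4 (by linarith)
end

section
/- Let m ≥ 1, let l = 2, let 0 ≤ s ≤ 2m-1, and set d = (2^{4m}-1)/(2^m+1) + 2^s; assume gcd(d, 2^{4m}-1) = 1. Let σ be the multiplicative inverse of 2^s modulo 2^{4m}-1 and set u = gcd(d·σ + 1, 2^m+1). If u = 2^m + 1, then S_d(1) = 0, and for every z in GF(2^{4m}) with z^{2^m+1} = 1 and z ≠ 1 one has S_d(z) = 2^{3m}. -/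
set_option linter.unusedSectionVars false

theorem s_eq_one (m s σ e : ℕ) (hm : 1 ≤ m) (hs : s ≤ 2 * m - 1)
    (he : (e : ℤ) = (2 ^ m - 1) * ((2 ^ m) ^ 2 + 1))
    (hσ : ((2:ℤ) ^ m + 1) ∣ 2 ^ s * σ - 1)
    (hu : ((2:ℤ) ^ m + 1) ∣ (e + 2 ^ s) * σ + 1) : s = 1 := by
  have h1 : ((2:ℤ) ^ m + 1) ∣ 2 * (2 ^ s - 2) := by
    obtain ⟨a, ha⟩ := hσ
    obtain ⟨b, hb⟩ := hu
    refine ⟨2 ^ s * b - (e + 2 ^ s) * a - ((2 ^ m) ^ 2 - 2 * 2 ^ m + 3), ?_⟩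
    linear_combination (e + 2 ^ s) * (-ha) + 2 ^ s * hb - he
  have h2 : ((2:ℤ) ^ m + 1) ∣ (2 ^ s - 2) := by
    refine IsCoprime.dvd_of_dvd_mul_left ?_ h1
    obtain ⟨k, rfl⟩ : ∃ k, m = k + 1 := ⟨m - 1, by omega⟩
    exact ⟨1, -2 ^ k, by ring⟩
  have hmp : (2:ℤ) ≤ 2 ^ m := by
    calc (2:ℤ) = 2 ^ 1 := by norm_num
      _ ≤ 2 ^ m := pow_le_pow_right₀ (by norm_num) hm
  by_cases hsm : s ≤ m
  · have h3 : (2:ℤ) ^ s ≤ 2 ^ m := pow_le_pow_right₀ (by norm_num) hsm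
    have h4 : (2:ℤ) ^ s - 2 = 0 := by
      apply Int.eq_zero_of_abs_lt_dvd h2
      have : (0:ℤ) < 2 ^ s := by positivity
      rw [abs_lt]; constructor <;> linarith
    have h5 : (2:ℤ) ^ s = 2 ^ 1 := by linarith
    exact Int.pow_right_injective (by norm_num) h5
  · exfalso
    obtain ⟨r, rfl⟩ : ∃ r, s = m + r := ⟨s - m, by omega⟩
    have h3 : ((2:ℤ) ^ m + 1) ∣ 2 ^ r + 2 := by
      obtain ⟨a, ha⟩ := h2
      refine ⟨2 ^ r - a, ?_⟩
      rw [pow_add] at ha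
      linear_combination -ha
    have h4 := Int.le_of_dvd (by positivity) h3
    obtain ⟨k, rfl⟩ : ∃ k, m = k + 2 := ⟨m - 2, by omega⟩
    have h5 : (2:ℤ) ^ r ≤ 2 ^ (k + 1) := pow_le_pow_right₀ (by norm_num) (by omega)
    have h6 : (0:ℤ) < 2 ^ k := by positivity
    rw [pow_succ] at h5
    rw [pow_add] at h4
    linarith


section field
variable {F : Type*} [Field F] [Fintype F] [Algebra (ZMod 2) F] [CharP F 2]

/-- The canonical additive character. -/
noncomputable def wchi (x : F) : ℤ := (-1 : ℤ) ^ (Algebra.trace (ZMod 2) F x).val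

theorem neg_one_pow_val_add (a b : ZMod 2) :
    (-1 : ℤ) ^ (a + b).val = (-1) ^ a.val * (-1) ^ b.val := by
  revert a b; decide

theorem wchi_add (x y : F) : wchi (x + y) = wchi x * wchi y := by
  unfold wchi
  rw [map_add, neg_one_pow_val_add]

theorem wchi_zero : wchi (0 : F) = 1 := by simp [wchi]

theorem wchi_mul_self (x : F) : wchi x * wchi x = 1 := by
  rw [← wchi_add, CharTwo.add_self_eq_zero, wchi_zero]

theorem wchi_sq (x : F) : wchi (x ^ 2) = wchi x := by
  unfold wchi
  have h := Algebra.trace_eq_of_algEquiv (FiniteField.frobeniusAlgEquiv (ZMod 2) F 2) x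
  rw [FiniteField.frobeniusAlgEquiv_apply, ZMod.card] at h
  rw [h]

theorem wchi_two_pow (k : ℕ) (x : F) : wchi (x ^ 2 ^ k) = wchi x := by
  induction k with
  | zero => simp
  | succ k ih => rw [pow_succ, pow_mul, wchi_sq, ih]

theorem exists_wchi_ne (b : F) (hb : b ≠ 0) : ∃ y, wchi (b * y) = -1 := by
  have htr := (traceForm_nondegenerate (ZMod 2) F).1 b
  by_contra! hf
  apply hb
  apply htr
  intro y
  rw [Algebra.traceForm_apply]
  have := hf y
  unfold wchi at this
  revert this
  generalize (Algebra.trace (ZMod 2) F) (b * y) = t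
  revert t; decide

theorem sum_wchi_mul (b : F) (hb : b ≠ 0) : ∑ y : F, wchi (b * y) = 0 := by
  obtain ⟨t, ht⟩ := exists_wchi_ne b hb
  have h : ∑ y : F, wchi (b * y) = ∑ y : F, wchi (b * (y + t)) :=
    (Fintype.sum_equiv (Equiv.addRight t) _ _ (fun y => rfl)).symm
  simp only [mul_add, wchi_add, ht] at h
  rw [← Finset.sum_mul] at h
  linarith

theorem wchi_eq_one_of_half (k : ℕ) (hc : Fintype.card F = 2 ^ (2 * k)) (x : F)
    (hx : x ^ 2 ^ k = x) : wchi x = 1 := by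
  have hf : Module.finrank (ZMod 2) F = 2 * k := by
    have := Module.card_eq_pow_finrank (K := ZMod 2) (V := F)
    rw [hc, ZMod.card] at this
    exact (Nat.pow_right_injective le_rfl this).symm
  have h := FiniteField.algebraMap_trace_eq_sum_pow (ZMod 2) F x
  rw [hf, two_mul, Finset.sum_range_add] at h
  have h2 : ∀ i, x ^ Nat.card (ZMod 2) ^ (k + i) = x ^ Nat.card (ZMod 2) ^ i := by
    intro i
    rw [Nat.card_zmod, pow_add, pow_mul, hx]
  simp only [h2] at h
  rw [CharTwo.add_self_eq_zero] at h
  have h3 : Algebra.trace (ZMod 2) F x = 0 := by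
    apply (algebraMap (ZMod 2) F).injective
    rw [h, map_zero]
  simp [wchi, h3]

theorem exists_gen : ∃ g : F, g ≠ 0 ∧ IsPrimitiveRoot g (Fintype.card F - 1) ∧
    ∀ y : F, y ≠ 0 → ∃ k : ℕ, g ^ k = y := by
  obtain ⟨g, hg⟩ := IsCyclic.exists_monoid_generator (α := Fˣ)
  refine ⟨g, g.ne_zero, ?_, ?_⟩
  · have h1 : orderOf g = Fintype.card F - 1 := by
      classical
      rw [orderOf_eq_card_of_forall_mem_powers hg, Nat.card_eq_fintype_card, Fintype.card_units]
    rw [← h1]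
    exact IsPrimitiveRoot.coe_units_iff.mpr (IsPrimitiveRoot.orderOf g)
  · intro y hy
    obtain ⟨k, hk⟩ := hg (Units.mk0 y hy)
    exact ⟨k, by simpa using congrArg Units.val hk⟩

theorem exists_root (n k : ℕ) (hn : 0 < n) (hk : 0 < k) (hc : Fintype.card F - 1 = n * k) (a : F)
    (ha : a ^ n = 1) : ∃ b : F, b ^ k = a := by
  obtain ⟨g, hg0, hg, hgen⟩ := exists_gen (F := F)
  have ha0 : a ≠ 0 := by
    rintro rfl
    rw [zero_pow hn.ne'] at ha
    exact zero_ne_one ha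
  obtain ⟨j, rfl⟩ := hgen a ha0
  rw [← pow_mul, hg.pow_eq_one_iff_dvd, hc, mul_comm n k] at ha
  obtain ⟨i, rfl⟩ := Nat.dvd_of_mul_dvd_mul_right hn ha
  exact ⟨g ^ i, by rw [← pow_mul, mul_comm]⟩

theorem card_fiber [DecidableEq F] (n k : ℕ) (hn : 0 < n) (hk : 0 < k)
    (hc : Fintype.card F - 1 = n * k) (b : F) (hb : b ≠ 0) :
    (Finset.univ.filter (fun y : F => y ^ k = b ^ k)).card = k := by
  obtain ⟨g, hg0, hg, hgen⟩ := exists_gen (F := F)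
  have hp : IsPrimitiveRoot (g ^ n) k := hg.pow (by rw [hc]; positivity) hc
  have h1 := hp.card_nthRoots (b ^ k)
  rw [if_pos ⟨b, rfl⟩] at h1
  have h2 := hp.nthRoots_nodup (pow_ne_zero k hb)
  rw [← Multiset.toFinset_card_of_nodup h2] at h1
  refine Eq.trans ?_ h1
  congr 1
  ext y
  simp [Polynomial.mem_nthRoots hk]

/-- The Gauss-type sum. -/
noncomputable def gsum (k : ℕ) (a : F) : ℤ := ∑ y : F, wchi (a * y ^ k)

theorem gsum_modeq (n k : ℕ) (hn : 0 < n) (hk : 0 < k)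
    (hc : Fintype.card F - 1 = n * k) (a : F) : (k : ℤ) ∣ gsum k a - 1 := by
  classical
  unfold gsum
  rw [← Finset.add_sum_erase _ _ (Finset.mem_univ (0 : F)), zero_pow hk.ne', mul_zero, wchi_zero,
    add_sub_cancel_left, Finset.sum_comp (fun w => wchi (a * w)) (fun y : F => y ^ k)]
  apply Finset.dvd_sum
  intro w hw
  obtain ⟨b, hb, rfl⟩ := Finset.mem_image.mp hw
  have hb0 : b ≠ 0 := Finset.ne_of_mem_erase hb
  have : (Finset.univ.erase (0 : F)).filter (fun y : F => y ^ k = b ^ k)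
      = Finset.univ.filter (fun y : F => y ^ k = b ^ k) := by
    ext y
    simp only [Finset.mem_filter, Finset.mem_erase, Finset.mem_univ, true_and, and_true,
      and_iff_right_iff_imp]
    rintro h rfl
    rw [zero_pow hk.ne'] at h
    exact pow_ne_zero k hb0 h.symm
  rw [this, card_fiber n k hn hk hc b hb0]
  simp

theorem gsum_sq [DecidableEq F] (m : ℕ) (hc : Fintype.card F = (2 ^ m) ^ 4) (a : F) :
    gsum (2 ^ m + 1) a ^ 2 = ((2 : ℤ) ^ m) ^ 4 *
      ∑ t ∈ Finset.univ.filter (fun t : F => a ^ 2 ^ m * t ^ (2 ^ m) ^ 2 = a * t),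
        wchi (a * t ^ (2 ^ m + 1)) := by
  have h1 : gsum (2 ^ m + 1) a ^ 2 =
      ∑ t : F, ∑ y : F, wchi (a * (y + t) ^ (2 ^ m + 1)) * wchi (a * y ^ (2 ^ m + 1)) := by
    rw [Finset.sum_comm, sq, gsum, Finset.sum_mul_sum, Finset.sum_comm]
    refine Finset.sum_congr rfl fun y _ => ?_
    exact (Fintype.sum_equiv (Equiv.addLeft y) _ _ (fun t => rfl)).symm
  have h2 : ∀ t y : F, wchi (a * (y + t) ^ (2 ^ m + 1)) * wchi (a * y ^ (2 ^ m + 1)) =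
      wchi (a * t ^ (2 ^ m + 1)) * wchi (((a * t) + a ^ 2 ^ m * t ^ (2 ^ m) ^ 2) * y ^ 2 ^ m) := by
    intro t y
    have e1 : wchi (a ^ 2 ^ m * t ^ (2 ^ m) ^ 2 * y ^ 2 ^ m) = wchi (a * t ^ 2 ^ m * y) := by
      rw [← wchi_two_pow m (a * t ^ 2 ^ m * y)]
      congr 1
      ring
    rw [add_mul (a * t), wchi_add (a * t * y ^ 2 ^ m), e1, ← wchi_add, ← wchi_add, ← wchi_add]
    congr 1
    rw [pow_succ (y + t), add_pow_char_pow]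
    have : a * y ^ (2 ^ m + 1) + a * y ^ (2 ^ m + 1) = 0 := CharTwo.add_self_eq_zero _
    linear_combination this
  have h3 : ∀ b : F, ∑ y : F, wchi (b * y ^ 2 ^ m) = if b = 0 then ((2 : ℤ) ^ m) ^ 4 else 0 := by
    intro b
    split_ifs with hb
    · subst hb
      simp [wchi_zero, hc]
    · rw [← sum_wchi_mul b hb]
      exact Fintype.sum_equiv (iterateFrobeniusEquiv F 2 m).toEquiv _ _
        (fun y => by simp [iterateFrobeniusEquiv_apply, iterateFrobenius_def])
  rw [h1]
  simp only [h2, ← Finset.mul_sum, h3]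
  rw [Finset.sum_filter, Finset.mul_sum]
  refine Finset.sum_congr rfl fun t _ => ?_
  have hiff : a * t + a ^ 2 ^ m * t ^ (2 ^ m) ^ 2 = 0 ↔ a ^ 2 ^ m * t ^ (2 ^ m) ^ 2 = a * t := by
    rw [CharTwo.add_eq_zero, eq_comm]
  simp only [hiff]
  split_ifs <;> ring

theorem gsum_generic (m : ℕ) (hm : 1 ≤ m) (hc : Fintype.card F = (2 ^ m) ^ 4) (e : ℕ)
    (he : e = (2 ^ m - 1) * ((2 ^ m) ^ 2 + 1)) (a : F) (ha : a ≠ 0) (hae : a ^ e ≠ 1)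
    (hce : Fintype.card F - 1 = e * (2 ^ m + 1)) (he0 : 0 < e) :
    gsum (2 ^ m + 1) a = ((2 : ℤ) ^ m) ^ 2 := by
  classical
  have hQ : (2 : ℤ) ≤ 2 ^ m := by
    calc (2:ℤ) = 2 ^ 1 := by norm_num
      _ ≤ 2 ^ m := pow_le_pow_right₀ (by norm_num) hm
  have hsq := gsum_sq m hc a
  have hR : Finset.univ.filter (fun t : F => a ^ 2 ^ m * t ^ (2 ^ m) ^ 2 = a * t) = {0} := by
    ext t
    simp only [Finset.mem_filter, Finset.mem_univ, true_and, Finset.mem_singleton]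
    constructor
    · intro h
      by_contra ht
      apply hae
      obtain ⟨k, hk⟩ : ∃ k, 2 ^ m = k + 1 := ⟨2 ^ m - 1, by have := Nat.one_le_two_pow (n := m); omega⟩
      rw [hk, Nat.add_sub_cancel] at he
      rw [hk] at h
      have h4 : a ^ k * t ^ (k * (k + 2)) = 1 := by
        have : (a * t) * (a ^ k * t ^ (k * (k + 2))) = (a * t) * 1 := by
          linear_combination h
        exact mul_left_cancel₀ (mul_ne_zero ha ht) this
      have h5 : t ^ (k * (k + 2) * ((k + 1) ^ 2 + 1)) = 1 := by
        have h6 := FiniteField.pow_card_sub_one_eq_one t ht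
        rw [hce, he, hk] at h6
        rw [← h6]; congr 1; ring
      have h7 : (a ^ k * t ^ (k * (k + 2))) ^ ((k + 1) ^ 2 + 1) = 1 := by rw [h4, one_pow]
      rw [mul_pow, ← pow_mul, ← pow_mul, h5, mul_one, ← he] at h7
      exact h7
    · rintro rfl
      simp
  rw [hR, Finset.sum_singleton, zero_pow (Nat.succ_ne_zero _), mul_zero, wchi_zero, mul_one] at hsq
  have h8 : (gsum (2 ^ m + 1) a - (2 ^ m) ^ 2) * (gsum (2 ^ m + 1) a + (2 ^ m) ^ 2) = 0 := by
    linear_combination hsq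
  rcases mul_eq_zero.mp h8 with h | h
  · linarith
  · exfalso
    obtain ⟨c, hcc⟩ := gsum_modeq e (2 ^ m + 1) he0 (Nat.succ_pos _) hce a
    push_cast at hcc
    have : ((2 : ℤ) ^ m + 1) ∣ 2 :=
      ⟨-c - (2 ^ m - 1), by linear_combination -hcc + h⟩
    have := Int.le_of_dvd (by norm_num) this
    linarith

theorem gsum_one (m : ℕ) (hm : 1 ≤ m) (hc : Fintype.card F = (2 ^ m) ^ 4) (e : ℕ)
    (he : e = (2 ^ m - 1) * ((2 ^ m) ^ 2 + 1))
    (hce : Fintype.card F - 1 = e * (2 ^ m + 1)) (he0 : 0 < e) :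
    gsum (2 ^ m + 1) (1 : F) = -((2 : ℤ) ^ m) ^ 3 := by
  classical
  have hQ : (2 : ℤ) ≤ 2 ^ m := by
    calc (2:ℤ) = 2 ^ 1 := by norm_num
      _ ≤ 2 ^ m := pow_le_pow_right₀ (by norm_num) hm
  have hsq := gsum_sq m hc (1 : F)
  simp only [one_pow, one_mul] at hsq
  have hR : (Finset.univ.filter (fun t : F => t ^ (2 ^ m) ^ 2 = t)).card = (2 ^ m) ^ 2 := by
    have h2 : 2 ≤ 2 ^ m := by exact_mod_cast hQ
    obtain ⟨k, hk⟩ : ∃ k, 2 ^ m = k + 1 := ⟨2 ^ m - 1, by omega⟩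
    rw [hk] at he hce h2 ⊢
    rw [Nat.add_sub_cancel] at he
    have h3 : Finset.univ.filter (fun t : F => t ^ (k + 1) ^ 2 = t) =
        insert 0 (Finset.univ.filter (fun t : F => t ^ (k * (k + 2)) = 1 ^ (k * (k + 2)))) := by
      ext t
      simp only [Finset.mem_filter, Finset.mem_univ, true_and, Finset.mem_insert, one_pow]
      by_cases ht : t = 0
      · simp [ht]
      · rw [show (k + 1) ^ 2 = k * (k + 2) + 1 by ring, pow_succ]
        simp [ht]
    have hk0 : 0 < k * (k + 2) := by
      have : 0 < k := by omega
      positivity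
    rw [h3, Finset.card_insert_of_notMem, card_fiber (F := F) ((k + 1) ^ 2 + 1) (k * (k + 2)) (by positivity)
      hk0 (by rw [hce, he]; ring) 1 one_ne_zero]
    · ring
    · simp [zero_pow hk0.ne']
  have hT : ∀ t ∈ Finset.univ.filter (fun t : F => t ^ (2 ^ m) ^ 2 = t),
      wchi (t ^ (2 ^ m + 1)) = 1 := by
    intro t ht
    have ht : t ^ (2 ^ m) ^ 2 = t := by simpa using ht
    apply wchi_eq_one_of_half (2 * m) (by rw [hc]; ring)
    rw [show 2 ^ (2 * m) = (2 ^ m) ^ 2 by ring, ← pow_mul, mul_comm, pow_mul, ht]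
  rw [Finset.sum_congr rfl hT, Finset.sum_const, hR] at hsq
  push_cast at hsq
  have h8 : (gsum (2 ^ m + 1) (1 : F) - (2 ^ m) ^ 3) * (gsum (2 ^ m + 1) (1 : F) + (2 ^ m) ^ 3)
      = 0 := by
    rw [nsmul_eq_mul] at hsq
    push_cast at hsq
    linear_combination hsq
  rcases mul_eq_zero.mp h8 with h | h
  · exfalso
    obtain ⟨c, hcc⟩ := gsum_modeq e (2 ^ m + 1) he0 (Nat.succ_pos _) hce (1 : F)
    push_cast at hcc
    have : ((2 : ℤ) ^ m + 1) ∣ 2 :=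
      ⟨-c + ((2 ^ m) ^ 2 - 2 ^ m + 1), by linear_combination -hcc + h⟩
    have := Int.le_of_dvd (by norm_num) this
    linarith
  · linarith

theorem gsum_special (m : ℕ) (hm : 1 ≤ m) (hc : Fintype.card F = (2 ^ m) ^ 4) (e : ℕ)
    (he : e = (2 ^ m - 1) * ((2 ^ m) ^ 2 + 1)) (a : F) (hae : a ^ e = 1)
    (hce : Fintype.card F - 1 = e * (2 ^ m + 1)) (he0 : 0 < e) :
    gsum (2 ^ m + 1) a = -((2 : ℤ) ^ m) ^ 3 := by
  obtain ⟨b, rfl⟩ := exists_root e (2 ^ m + 1) he0 (Nat.succ_pos _) hce a hae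
  have hb : b ≠ 0 := by
    rintro rfl
    rw [zero_pow (Nat.succ_ne_zero _), zero_pow he0.ne'] at hae
    exact zero_ne_one hae
  rw [← gsum_one (F := F) m hm hc e he hce he0]
  unfold gsum
  refine Fintype.sum_equiv (Equiv.mulLeft₀ b hb) _ _ (fun y => ?_)
  simp [mul_pow]

/-- The averaging argument. -/
theorem weil_avg (m : ℕ) (hm : 1 ≤ m) (hc : Fintype.card F = (2 ^ m) ^ 4) (e : ℕ)
    (hce : Fintype.card F - 1 = e * (2 ^ m + 1)) (he0 : 0 < e) (z : F)
    (hz : z ^ (2 ^ m + 1) = 1) (C : ℤ)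
    (hC : ∀ x : F, x ≠ 0 → x ^ e ≠ z ^ 2 → gsum (2 ^ m + 1) ((z ^ 2 + x ^ e) * x ^ 2) = C) :
    ((2:ℤ) ^ m + 1) * (∑ x : F, wchi (z * x + x ^ (e + 2)) - 1) =
      2 ^ m * (C - 1) + e * (2 ^ m + 1) := by
  classical
  have hz0 : z ≠ 0 := by
    rintro rfl
    rw [zero_pow (Nat.succ_ne_zero _)] at hz
    exact zero_ne_one hz
  set T : ℤ := ∑ x ∈ Finset.univ.erase (0 : F), wchi (z * x + x ^ (e + 2)) with hT
  have hS : ∑ x : F, wchi (z * x + x ^ (e + 2)) - 1 = T := by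
    rw [← Finset.add_sum_erase _ _ (Finset.mem_univ (0 : F)), ← hT]
    simp [wchi_zero]
  have hrew : ∀ x : F, wchi (z * x + x ^ (e + 2)) = wchi ((z ^ 2 + x ^ e) * x ^ 2) := by
    intro x
    rw [wchi_add, ← wchi_sq (z * x), ← wchi_add]
    congr 1
    ring
  have hcard : (Finset.univ.erase (0 : F)).card = e * (2 ^ m + 1) := by
    rw [Finset.card_erase_of_mem (Finset.mem_univ _), Finset.card_univ, hce]
  have hshift : ∀ y ∈ Finset.univ.erase (0 : F),
      ∑ x ∈ Finset.univ.erase (0 : F), wchi ((z ^ 2 + x ^ e) * x ^ 2 * (y ^ 2) ^ (2 ^ m + 1)) = T := by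
    intro y hy
    have hy0 : y ≠ 0 := Finset.ne_of_mem_erase hy
    have hye : (y ^ (2 ^ m + 1)) ^ e = 1 := by
      rw [← pow_mul, mul_comm, ← hce, FiniteField.pow_card_sub_one_eq_one y hy0]
    rw [hT]
    refine Finset.sum_equiv (Equiv.mulRight₀ (y ^ (2 ^ m + 1)) (pow_ne_zero _ hy0)) ?_ ?_
    · intro x
      simp [hy0]
    · intro x _
      rw [hrew]
      simp only [Equiv.mulRight₀_apply, mul_pow, hye]
      congr 1
      ring
  have hsum : ((e * (2 ^ m + 1) : ℕ) : ℤ) * T =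
      ∑ x ∈ Finset.univ.erase (0 : F), (gsum (2 ^ m + 1) ((z ^ 2 + x ^ e) * x ^ 2) - 1) := by
    rw [← hcard, ← nsmul_eq_mul, ← Finset.sum_const, ← Finset.sum_congr rfl hshift, Finset.sum_comm]
    refine Finset.sum_congr rfl fun x _ => ?_
    have : gsum (2 ^ m + 1) ((z ^ 2 + x ^ e) * x ^ 2) =
        ∑ y : F, wchi ((z ^ 2 + x ^ e) * x ^ 2 * (y ^ 2) ^ (2 ^ m + 1)) := by
      unfold gsum
      exact (Fintype.sum_equiv (frobeniusEquiv F 2).toEquiv _ _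
        (fun y => by simp [frobeniusEquiv_apply, frobenius_def])).symm
    rw [this, ← Finset.add_sum_erase _ _ (Finset.mem_univ (0 : F))]
    simp [wchi_zero]
  have hfib : ((Finset.univ.erase (0 : F)).filter (fun x => x ^ e = z ^ 2)).card = e := by
    obtain ⟨b, hb⟩ := exists_root (2 ^ m + 1) e (Nat.succ_pos _) he0 (by rw [hce, mul_comm]) (z ^ 2)
      (by rw [← pow_mul, mul_comm, pow_mul, hz, one_pow])
    have hb0 : b ≠ 0 := by
      rintro rfl
      rw [zero_pow he0.ne'] at hb
      exact pow_ne_zero 2 hz0 hb.symm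
    have h := card_fiber (2 ^ m + 1) e (Nat.succ_pos _) he0 (by rw [hce, mul_comm]) b hb0
    refine Eq.trans ?_ h
    rw [hb]
    congr 1
    ext x
    simp only [Finset.mem_filter, Finset.mem_erase, Finset.mem_univ, true_and, and_true,
      and_iff_right_iff_imp]
    rintro h rfl
    rw [zero_pow he0.ne'] at h
    exact pow_ne_zero 2 hz0 h.symm
  have hfib2 : (((Finset.univ.erase (0 : F)).filter (fun x => ¬ x ^ e = z ^ 2)).card : ℤ)
      = e * 2 ^ m := by
    have h := Finset.card_filter_add_card_filter_not (s := Finset.univ.erase (0 : F))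
      (fun x => x ^ e = z ^ 2)
    rw [hfib, hcard] at h
    zify at h
    linear_combination h
  rw [← Finset.sum_filter_add_sum_filter_not _ (fun x => x ^ e = z ^ 2)] at hsum
  have hA : ∀ x ∈ (Finset.univ.erase (0 : F)).filter (fun x => x ^ e = z ^ 2),
      gsum (2 ^ m + 1) ((z ^ 2 + x ^ e) * x ^ 2) - 1 = e * (2 ^ m + 1) := by
    intro x hx
    rw [(Finset.mem_filter.mp hx).2, CharTwo.add_self_eq_zero]
    have : ((Fintype.card F - 1 : ℕ) : ℤ) = e * (2 ^ m + 1) := by rw [hce]; push_cast; ring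
    rw [← this, Nat.cast_sub Fintype.card_pos]
    simp [gsum, wchi_zero]
  have hB : ∀ x ∈ (Finset.univ.erase (0 : F)).filter (fun x => ¬ x ^ e = z ^ 2),
      gsum (2 ^ m + 1) ((z ^ 2 + x ^ e) * x ^ 2) - 1 = C - 1 := by
    intro x hx
    rw [Finset.mem_filter] at hx
    rw [hC x (Finset.ne_of_mem_erase hx.1) hx.2]
  rw [Finset.sum_congr rfl hA, Finset.sum_congr rfl hB, Finset.sum_const, Finset.sum_const,
    nsmul_eq_mul, nsmul_eq_mul, hfib, hfib2] at hsum
  have he' : (e : ℤ) ≠ 0 := by exact_mod_cast he0.ne'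
  apply mul_left_cancel₀ he'
  rw [hS]
  push_cast at hsum
  linear_combination hsum

theorem pow_key (m : ℕ) (e : ℕ) (hc : Fintype.card F = (2 ^ m) ^ 4)
    (he : e = (2 ^ m - 1) * ((2 ^ m) ^ 2 + 1))
    (v x : F) (hx : x ≠ 0) (hv : v ^ (2 ^ m + 1) = 1)
    (hce : Fintype.card F - 1 = e * (2 ^ m + 1)) (hne : v + x ^ e ≠ 0) :
    v ^ 2 * ((v + x ^ e) * x ^ 2) ^ e = 1 := by
  set w := x ^ e with hw
  have hwU : w ^ (2 ^ m + 1) = 1 := by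
    rw [hw, ← pow_mul, ← hce, FiniteField.pow_card_sub_one_eq_one x hx]
  have h1 : (v + w) ^ 2 ^ m * (v * w) = v + w := by
    rw [add_pow_char_pow]
    rw [pow_succ] at hv hwU
    linear_combination w * hv + v * hwU
  rw [mul_pow, ← pow_mul, mul_comm 2 e, pow_mul, ← hw]
  obtain ⟨k, hk⟩ : ∃ k, 2 ^ m = k + 1 := ⟨2 ^ m - 1, by have := Nat.one_le_two_pow (n := m); omega⟩
  rw [hk] at h1 hv hwU he
  rw [Nat.add_sub_cancel] at he
  have h2 : (v + w) ^ k * (v * w) = 1 := by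
    apply mul_left_cancel₀ hne
    rw [mul_one]
    linear_combination h1
  have h3 : ((v + w) ^ k * (v * w)) ^ ((k + 1) ^ 2 + 1) = 1 := by rw [h2, one_pow]
  have h4 : (v * w) ^ ((k + 1) ^ 2 + 1) = (v * w) ^ 2 := by
    rw [show (k + 1) ^ 2 + 1 = (k + 1 + 1) * k + 2 by ring, pow_add, pow_mul, mul_pow v w (k + 1 + 1),
      hv, hwU, one_mul, one_pow, one_mul]
  rw [mul_pow, ← pow_mul, h4, ← he] at h3
  linear_combination h3

open Classical in
theorem weil_main (m : ℕ) (hm : 1 ≤ m) (hc : Fintype.card F = (2 ^ m) ^ 4) (e : ℕ)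
    (he : e = (2 ^ m - 1) * ((2 ^ m) ^ 2 + 1)) (z : F) (hz : z ^ (2 ^ m + 1) = 1) :
    ∑ x : F, wchi (z * x + x ^ (e + 2)) = if z = 1 then 0 else (2:ℤ) ^ (3 * m) := by
  have hQ : 2 ≤ 2 ^ m := by
    calc 2 = 2 ^ 1 := by norm_num
      _ ≤ 2 ^ m := Nat.pow_le_pow_right (by norm_num) hm
  have hez : (e : ℤ) = (2 ^ m - 1) * ((2 ^ m) ^ 2 + 1) := by
    rw [he]; push_cast [Nat.cast_sub (show 1 ≤ 2 ^ m by omega)]; ring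
  have hce : Fintype.card F - 1 = e * (2 ^ m + 1) := by
    zify [Fintype.card_pos (α := F), show 1 ≤ Fintype.card F from Fintype.card_pos]
    rw [hez, hc]; push_cast; ring
  have he0 : 0 < e := by
    rw [he]
    have : 0 < 2 ^ m - 1 := by omega
    positivity
  have hpos : (2:ℤ) ^ m + 1 ≠ 0 := by positivity
  have hz2 : (z ^ 2) ^ (2 ^ m + 1) = 1 := by rw [← pow_mul, mul_comm, pow_mul, hz, one_pow]
  have hne : ∀ x : F, x ^ e ≠ z ^ 2 → z ^ 2 + x ^ e ≠ 0 := by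
    intro x h h'
    exact h (CharTwo.add_eq_zero.mp h').symm
  split_ifs with h1
  · subst h1
    have h := weil_avg m hm hc e hce he0 (1 : F) hz (-((2 : ℤ) ^ m) ^ 3) (by
      intro x hx hxe
      apply gsum_special m hm hc e he _ _ hce he0
      have := pow_key m e hc he _ x hx hz2 hce (hne x hxe)
      simpa using this)
    apply mul_left_cancel₀ hpos
    rw [hez] at h
    linear_combination h
  · have h := weil_avg m hm hc e hce he0 z hz (((2 : ℤ) ^ m) ^ 2) (by
      intro x hx hxe
      apply gsum_generic m hm hc e he _ (mul_ne_zero (hne x hxe) (pow_ne_zero 2 hx)) _ hce he0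
      intro h4
      have := pow_key m e hc he _ x hx hz2 hce (hne x hxe)
      rw [h4, mul_one] at this
      apply h1
      have h5 : (z ^ 2 - 1) ^ 2 = 0 := by
        linear_combination this - (z ^ 2 - 1) * CharTwo.two_eq_zero (R := F)
      have h6 : (z - 1) ^ 2 = 0 := by
        have h7 : z ^ 2 - 1 = 0 := (pow_eq_zero_iff two_ne_zero).mp h5
        linear_combination h7 - (z - 1) * CharTwo.two_eq_zero (R := F)
      exact sub_eq_zero.mp (pow_eq_zero_iff two_ne_zero |>.mp h6))
    apply mul_left_cancel₀ hpos
    rw [hez] at h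
    rw [mul_comm 3 m, pow_mul]
    linear_combination h

end field

/-- For `l = 2`, `d = (2^(4m)-1)/(2^m+1) + 2^s` coprime to `2^(4m)-1`, `σ` the
inverse of `2^s` modulo `2^(4m)-1`, and `u = gcd(dσ+1, 2^m+1)`: if `u = 2^m+1`
then `S_d(1) = 0`, and every `z ≠ 1` with `z^(2^m+1) = 1` satisfies
`S_d(z) = 2^(3m)`. -/
theorem weil_sum_on_subgroup_u_eq (m l s d σ u : ℕ) (hm : 1 ≤ m) (hl : l = 2)
    (hs : s ≤ 2 * m - 1)
    (hd : d = (2 ^ (2 * l * m) - 1) / (2 ^ m + 1) + 2 ^ s)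
    (hgcd : Nat.gcd d (2 ^ (2 * l * m) - 1) = 1)
    (hσ : 2 ^ s * σ ≡ 1 [MOD 2 ^ (2 * l * m) - 1])
    (hu : u = Nat.gcd (d * σ + 1) (2 ^ m + 1)) (hue : u = 2 ^ m + 1) :
    binaryWeilSum (2 * l * m) d 1 = 0 ∧
      ∀ z : GaloisField 2 (2 * l * m), z ^ (2 ^ m + 1) = 1 → z ≠ 1 →
        binaryWeilSum (2 * l * m) d z = 2 ^ (3 * m) := by
  subst hl
  have hQ : 1 ≤ 2 ^ m := Nat.one_le_two_pow
  obtain ⟨e, he⟩ : ∃ e, e = (2 ^ m - 1) * ((2 ^ m) ^ 2 + 1) := ⟨_, rfl⟩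
  have hez : (e : ℤ) = (2 ^ m - 1) * ((2 ^ m) ^ 2 + 1) := by
    rw [he]; push_cast [Nat.cast_sub hQ]; ring
  have h1 : 2 ^ (2 * 2 * m) - 1 = e * (2 ^ m + 1) := by
    zify [show 1 ≤ 2 ^ (2 * 2 * m) from Nat.one_le_two_pow]
    rw [hez]; ring
  rw [h1, Nat.mul_div_cancel _ (by omega)] at hd
  have hs1 : s = 1 := by
    apply s_eq_one m s σ e hm hs hez
    · rw [h1] at hσ
      have h2 : 2 ^ s * σ ≡ 1 [MOD 2 ^ m + 1] := hσ.of_mul_left e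
      have := (Nat.modEq_iff_dvd.mp h2.symm)
      push_cast at this
      exact this
    · have h3 : 2 ^ m + 1 ∣ d * σ + 1 := by
        rw [← hue, hu]; exact Nat.gcd_dvd_left _ _
      rw [hd] at h3
      exact_mod_cast h3
  rw [hs1, pow_one] at hd
  have hcard : Fintype.card (GaloisField 2 (2 * 2 * m)) = (2 ^ m) ^ 4 := by
    rw [← Nat.card_eq_fintype_card, GaloisField.card 2 _ (by omega)]
    ring
  have key := fun z => weil_main (F := GaloisField 2 (2 * 2 * m)) m hm hcard e he z
  subst hd
  refine ⟨?_, fun z hz hz1 => ?_⟩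
  · have := key 1 (one_pow _)
    rw [if_pos rfl] at this
    exact this
  · have := key z hz
    rw [if_neg hz1] at this
    exact this
end
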